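/- For every θ ∈ [0, π/2], one has K(sin(θ/2)) · K(cos(θ/2)) = ∫_0^{π/2} K(√(1 − sin²θ cos²φ)) dφ. -/

import Mathlib

open Real MeasureTheory intervalIntegral

/-- Complete elliptic integral of the first kind. -/
noncomputable def ellipticK (k : ℝ) : ℝ :=
  ∫ θ in (0:ℝ)..(π/2), 1 / Real.sqrt (1 - k^2 * Real.sin θ ^ 2)

/-!
Both sides, multiplied by four, are the integral over the plane of
`1 / √(cosh² A cosh² B - (sinh A sinh B + cos θ)²)`.  The radicand factors as
`(cosh (A - B) - cos θ) * (cosh (A + B) + cos θ)`, so in the variables `u = (A - B) / 2` and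
`v = (A + B) / 2` the integral is a product of two elliptic integrals; for fixed `A` this is the
statement that the inner integral is a convolution in `u + v = A`.  On the other hand the
Gudermannian substitution `sin ω = tanh B` turns the inner integral into that of
`1 / √(1 - (a cos ω + b sin ω)²)` over a full period, where `a² + b² = 1 - sin² θ / cosh² A`, which
is again an elliptic integral; the same substitution in `A` gives the right-hand side.
-/

section EvenFunctions

variable {E : Type*} [NormedAddCommGroup E] [NormedSpace ℝ E]

theorem intervalIntegral_neg_self_of_even {f : ℝ → E} (hf : f.Even) (a : ℝ) :
    ∫ x in -a..a, f x = (2 : ℝ) • ∫ x in (0 : ℝ)..a, f x := by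
  have hneg : ∫ x in -a..0, f x = ∫ x in (0 : ℝ)..a, f x := by
    simpa only [hf _, neg_zero] using (integral_comp_neg (a := 0) (b := a) f).symm
  by_cases h_int : IntervalIntegrable f volume 0 a
  · have h_int' : IntervalIntegrable f volume (-a) 0 := by
      rw [IntervalIntegrable.iff_comp_neg]
      simpa only [hf _, neg_neg, neg_zero] using h_int.symm
    rw [← integral_add_adjacent_intervals h_int' h_int, hneg, two_smul]
  · have h_int' : ¬ IntervalIntegrable f volume (-a) a := fun h ↦
      h_int (h.mono_set (Set.uIcc_subset_uIcc (by
        rcases le_total 0 a with ha | ha <;> simp [ha]) Set.right_mem_uIcc))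
    rw [integral_undef h_int, integral_undef h_int', smul_zero]

end EvenFunctions

section Gudermannian

/-- The Gudermannian function, the diffeomorphism from `ℝ` onto `(-π/2, π/2)` which substitutes
circular functions for hyperbolic ones: `sin (gudermannian t) = tanh t`. -/
noncomputable def gudermannian (t : ℝ) : ℝ := arctan (sinh t)

theorem cos_gudermannian (t : ℝ) : cos (gudermannian t) = 1 / cosh t := by
  rw [gudermannian, cos_arctan, ← cosh_sq', sqrt_sq (cosh_pos t).le]

theorem sin_gudermannian (t : ℝ) : sin (gudermannian t) = sinh t / cosh t := by
  rw [gudermannian, sin_arctan, ← cosh_sq', sqrt_sq (cosh_pos t).le]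

theorem hasDerivAt_gudermannian (t : ℝ) : HasDerivAt gudermannian (1 / cosh t) t := by
  refine (hasDerivAt_sinh t).arctan.congr_deriv ?_
  rw [← cosh_sq']
  field_simp

theorem gudermannian_injective : Function.Injective gudermannian :=
  arctan_injective.comp sinh_injective

theorem range_gudermannian : Set.range gudermannian = Set.Ioo (-(π / 2)) (π / 2) := by
  rw [← range_arctan]
  exact sinh_surjective.range_comp arctan

variable {E : Type*} [NormedAddCommGroup E] [NormedSpace ℝ E]

theorem integral_comp_gudermannian (f : ℝ → E) :
    ∫ t, (1 / cosh t) • f (gudermannian t) = ∫ φ in -(π / 2)..π / 2, f φ := by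
  have h := integral_image_eq_integral_abs_deriv_smul MeasurableSet.univ
    (fun t _ ↦ (hasDerivAt_gudermannian t).hasDerivWithinAt) gudermannian_injective.injOn f
  simp only [abs_of_pos (one_div_pos.2 (cosh_pos _)), setIntegral_univ, Set.image_univ,
    range_gudermannian] at h
  rw [← h, integral_of_le (by linarith [pi_pos]), integral_Ioc_eq_integral_Ioo]

theorem integrable_comp_gudermannian_iff {f : ℝ → E} :
    Integrable (fun t ↦ (1 / cosh t) • f (gudermannian t)) ↔
      IntervalIntegrable f volume (-(π / 2)) (π / 2) := by
  have h := integrableOn_image_iff_integrableOn_abs_deriv_smul MeasurableSet.univ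
    (fun t _ ↦ (hasDerivAt_gudermannian t).hasDerivWithinAt) gudermannian_injective.injOn f
  simp only [abs_of_pos (one_div_pos.2 (cosh_pos _)), integrableOn_univ, Set.image_univ,
    range_gudermannian] at h
  rw [← h, intervalIntegrable_iff_integrableOn_Ioo_of_le (by linarith [pi_pos])]

end Gudermannian

section EllipticK

theorem ellipticK_zero : ellipticK 0 = π / 2 := by
  simp [ellipticK]

theorem integral_inv_sqrt_one_sub_mul_cos_sub_sq (k δ : ℝ) :
    ∫ ω in -(π / 2)..π / 2, 1 / √(1 - (k * cos (ω - δ)) ^ 2) = 2 * ellipticK k := by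
  set f : ℝ → ℝ := fun φ ↦ 1 / √(1 - k ^ 2 * sin φ ^ 2) with hf
  have f_even : f.Even := fun φ ↦ by simp only [hf, sin_neg, neg_sq]
  have f_periodic : Function.Periodic f π := fun φ ↦ by simp only [hf, sin_add_pi, neg_sq]
  calc ∫ ω in -(π / 2)..π / 2, 1 / √(1 - (k * cos (ω - δ)) ^ 2)
    _ = ∫ ω in -(π / 2)..π / 2, f (ω + (π / 2 - δ)) := by
      refine integral_congr fun ω _ ↦ ?_
      simp only [hf, mul_pow, ← sin_add_pi_div_two (ω - δ)]
      ring_nf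
    _ = ∫ φ in -δ..-δ + π, f φ := by
      rw [integral_comp_add_right]
      ring_nf
    _ = ∫ φ in -(π / 2)..π / 2, f φ := by
      rw [f_periodic.intervalIntegral_add_eq (-δ) (-(π / 2))]
      ring_nf
    _ = 2 * ellipticK k := intervalIntegral_neg_self_of_even f_even _

theorem integral_inv_sqrt_one_sub_cos_add_sin_sq (a b : ℝ) :
    ∫ ω in -(π / 2)..π / 2, 1 / √(1 - (a * cos ω + b * sin ω) ^ 2)
      = 2 * ellipticK √(a ^ 2 + b ^ 2) := by
  set z : ℂ := ⟨a, b⟩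
  have ha : ‖z‖ * cos z.arg = a := Complex.norm_mul_cos_arg z
  have hb : ‖z‖ * sin z.arg = b := Complex.norm_mul_sin_arg z
  have hnorm : √(a ^ 2 + b ^ 2) = ‖z‖ := (Complex.norm_eq_sqrt_sq_add_sq z).symm
  rw [hnorm, ← integral_inv_sqrt_one_sub_mul_cos_sub_sq ‖z‖ z.arg]
  refine integral_congr fun ω _ ↦ ?_
  simp only [cos_sub, ← ha, ← hb]
  ring_nf

/-- The integrand of `2 * ellipticK k`, as an integral over `ℝ`, after the substitution
`cos φ = 1 / cosh t`. -/
noncomputable def ellipticKernel (k t : ℝ) : ℝ := 1 / √(cosh t ^ 2 - k ^ 2)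

theorem ellipticKernel_eq_gudermannian (k t : ℝ) :
    ellipticKernel k t = 1 / cosh t * (1 / √(1 - (k * cos (gudermannian t)) ^ 2)) := by
  have h : cosh t ^ 2 - k ^ 2 = cosh t ^ 2 * (1 - (k * cos (gudermannian t)) ^ 2) := by
    rw [cos_gudermannian]
    field_simp
  rw [ellipticKernel, h, sqrt_mul (sq_nonneg _), sqrt_sq (cosh_pos t).le, one_div_mul_one_div]

theorem integral_ellipticKernel (k : ℝ) : ∫ t, ellipticKernel k t = 2 * ellipticK k := by
  simp only [ellipticKernel_eq_gudermannian]
  refine (integral_comp_gudermannian fun φ ↦ 1 / √(1 - (k * cos φ) ^ 2)).trans ?_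
  simpa only [sub_zero] using integral_inv_sqrt_one_sub_mul_cos_sub_sq k 0

theorem integrable_ellipticKernel {k : ℝ} (hk : k ^ 2 < 1) : Integrable (ellipticKernel k) := by
  have radicand_pos (φ : ℝ) : 0 < 1 - (k * cos φ) ^ 2 := by
    rw [mul_pow]
    nlinarith [cos_sq_le_one φ, sq_nonneg k]
  have h_cont : Continuous fun φ ↦ 1 / √(1 - (k * cos φ) ^ 2) :=
    continuous_const.div (by fun_prop) fun φ ↦ (sqrt_pos.2 (radicand_pos φ)).ne'
  exact (integrable_comp_gudermannian_iff.2 (h_cont.intervalIntegrable _ _)).congr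
    (.of_forall fun t ↦ (ellipticKernel_eq_gudermannian k t).symm)

end EllipticK

section ProductFormula

theorem cosh_sq_mul_cosh_sq_sub_sq (A B c : ℝ) :
    cosh A ^ 2 * cosh B ^ 2 - (sinh A * sinh B + c) ^ 2
      = (cosh (A - B) - c) * (cosh (A + B) + c) := by
  rw [cosh_sub, cosh_add]
  ring

variable (θ : ℝ)

theorem ellipticKernel_mul_ellipticKernel (A u : ℝ) :
    ellipticKernel (cos (θ / 2)) u * ellipticKernel (sin (θ / 2)) (A - u)
      = 2 * (1 / √(cosh A ^ 2 * cosh (A - 2 * u) ^ 2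
          - (sinh A * sinh (A - 2 * u) + cos θ) ^ 2)) := by
  have h_cos : cosh (A - (A - 2 * u)) - cos θ = 2 * (cosh u ^ 2 - cos (θ / 2) ^ 2) := by
    rw [sub_sub_cancel, cosh_two_mul, sinh_sq, cos_sq, mul_div_cancel₀ _ two_ne_zero]
    ring
  have h_sin : cosh (A + (A - 2 * u)) + cos θ = 2 * (cosh (A - u) ^ 2 - sin (θ / 2) ^ 2) := by
    rw [show A + (A - 2 * u) = 2 * (A - u) by ring, cosh_two_mul, sinh_sq, sin_sq_eq_half_sub,
      mul_div_cancel₀ _ two_ne_zero]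
    ring
  have h_nonneg : 0 ≤ cosh u ^ 2 - cos (θ / 2) ^ 2 := by
    linarith [cos_sq_le_one (θ / 2), cosh_sq' u, sq_nonneg (sinh u)]
  rw [cosh_sq_mul_cosh_sq_sub_sq, h_cos, h_sin, mul_mul_mul_comm, ← sq,
    sqrt_mul (sq_nonneg _), sqrt_sq zero_le_two, sqrt_mul h_nonneg, ellipticKernel, ellipticKernel]
  field_simp

theorem integral_inv_sqrt_cosh_sq_mul_cosh_sq_sub_sq (A : ℝ) :
    ∫ B, 1 / √(cosh A ^ 2 * cosh B ^ 2 - (sinh A * sinh B + cos θ) ^ 2)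
      = 1 / cosh A * (2 * ellipticK √(1 - sin θ ^ 2 * cos (gudermannian A) ^ 2)) := by
  set α := gudermannian A with hα
  have integrand_eq (B : ℝ) :
      1 / √(cosh A ^ 2 * cosh B ^ 2 - (sinh A * sinh B + cos θ) ^ 2)
        = 1 / cosh A * ((1 / cosh B) * (1 / √(1 - (cos θ * cos α * cos (gudermannian B)
            + sin α * sin (gudermannian B)) ^ 2))) := by
    have radicand_eq : cosh A ^ 2 * cosh B ^ 2 - (sinh A * sinh B + cos θ) ^ 2
        = (cosh A * cosh B) ^ 2 * (1 - (cos θ * cos α * cos (gudermannian B)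
            + sin α * sin (gudermannian B)) ^ 2) := by
      simp only [hα, cos_gudermannian, sin_gudermannian]
      field_simp
      ring
    rw [radicand_eq, sqrt_mul (sq_nonneg _),
      sqrt_sq (mul_pos (cosh_pos A) (cosh_pos B)).le]
    simp only [one_div, mul_inv, mul_assoc]
  have modulus_sq : (cos θ * cos α) ^ 2 + sin α ^ 2 = 1 - sin θ ^ 2 * cos α ^ 2 := by
    rw [mul_pow, sin_sq α, cos_sq' θ]
    ring
  simp only [integrand_eq]
  rw [MeasureTheory.integral_const_mul, ← modulus_sq, ← integral_inv_sqrt_one_sub_cos_add_sin_sq]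
  exact congrArg _ (integral_comp_gudermannian
    fun ω ↦ 1 / √(1 - (cos θ * cos α * cos ω + sin α * sin ω) ^ 2))

open scoped Convolution in
theorem ellipticKernel_convolution_ellipticKernel (A : ℝ) :
    (ellipticKernel (cos (θ / 2)) ⋆ ellipticKernel (sin (θ / 2))) A
      = 1 / cosh A * (2 * ellipticK √(1 - sin θ ^ 2 * cos (gudermannian A) ^ 2)) := by
  let F (B : ℝ) : ℝ := 1 / √(cosh A ^ 2 * cosh B ^ 2 - (sinh A * sinh B + cos θ) ^ 2)
  calc (ellipticKernel (cos (θ / 2)) ⋆ ellipticKernel (sin (θ / 2))) A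
    _ = ∫ u, 2 * F (A - 2 * u) := by
      simp only [convolution_lsmul, smul_eq_mul, ellipticKernel_mul_ellipticKernel, F]
    _ = ∫ B, F B := by
      rw [MeasureTheory.integral_const_mul, Measure.integral_comp_mul_left (fun x ↦ F (A - x)),
        integral_sub_left_eq_self F]
      simp
    _ = _ := integral_inv_sqrt_cosh_sq_mul_cosh_sq_sub_sq θ A

end ProductFormula

open scoped Convolution in
theorem stmt_3_general (θ : ℝ) (hθ : sin θ ≠ 0) :
    ellipticK (sin (θ / 2)) * ellipticK (cos (θ / 2))
      = ∫ φ in (0 : ℝ)..π / 2, ellipticK √(1 - sin θ ^ 2 * cos φ ^ 2) := by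
  let R (φ : ℝ) : ℝ := ellipticK √(1 - sin θ ^ 2 * cos φ ^ 2)
  have h_half : sin θ = 2 * sin (θ / 2) * cos (θ / 2) := by
    rw [← sin_two_mul, mul_div_cancel₀ θ two_ne_zero]
  have sin_sq_pos : 0 < sin (θ / 2) ^ 2 := sq_pos_of_ne_zero fun h ↦ hθ (by simp [h_half, h])
  have cos_sq_pos : 0 < cos (θ / 2) ^ 2 := sq_pos_of_ne_zero fun h ↦ hθ (by simp [h_half, h])
  have h_cos : Integrable (ellipticKernel (cos (θ / 2))) :=
    integrable_ellipticKernel (by linarith [cos_sq' (θ / 2)])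
  have h_sin : Integrable (ellipticKernel (sin (θ / 2))) :=
    integrable_ellipticKernel (by linarith [sin_sq (θ / 2)])
  have key : 4 * (ellipticK (sin (θ / 2)) * ellipticK (cos (θ / 2)))
      = 4 * ∫ φ in (0 : ℝ)..π / 2, R φ := by
    calc 4 * (ellipticK (sin (θ / 2)) * ellipticK (cos (θ / 2)))
      _ = ∫ A, (ellipticKernel (cos (θ / 2)) ⋆ ellipticKernel (sin (θ / 2))) A := by
        rw [integral_convolution _ h_cos h_sin, ContinuousLinearMap.lsmul_apply, smul_eq_mul,
          integral_ellipticKernel, integral_ellipticKernel]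
        ring
      _ = ∫ A, (1 / cosh A) • (2 * R (gudermannian A)) := by
        simp only [ellipticKernel_convolution_ellipticKernel, smul_eq_mul, R]
      _ = 2 * ∫ φ in -(π / 2)..π / 2, R φ := by
        rw [integral_comp_gudermannian (fun φ ↦ 2 * R φ), intervalIntegral.integral_const_mul]
      _ = 4 * ∫ φ in (0 : ℝ)..π / 2, R φ := by
        rw [intervalIntegral_neg_self_of_even (fun φ ↦ by simp only [R, cos_neg]), smul_eq_mul]
        ring
  exact mul_left_cancel₀ four_ne_zero key

theorem stmt_3 (θ : ℝ) (hθ : θ ∈ Set.Icc 0 (π/2)) :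
    ellipticK (Real.sin (θ/2)) * ellipticK (Real.cos (θ/2))
      = ∫ φ in (0:ℝ)..(π/2),
          ellipticK (Real.sqrt (1 - Real.sin θ ^ 2 * Real.cos φ ^ 2)) := by
  rcases hθ.1.eq_or_lt with rfl | hθ_pos
  · simp [ellipticK_zero]
  · exact stmt_3_general θ (sin_pos_of_pos_of_lt_pi hθ_pos (by linarith [hθ.2, pi_pos])).ne'
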